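/- arXiv:2202.03234 — 2 statements merged into one kernel-verified Lean document; each statement's English description precedes it below -/
import Mathlib

section
/- Let H_n, H_∞ be complex Hilbert spaces and J : H_n → H_∞ a bounded operator. Suppose H and H' are complex Hilbert spaces with isometries ι_n : H_n → H, ι_∞ : H_∞ → H and κ_n : H_n → H', κ_∞ : H_∞ → H' such that ι_∞* ∘ ι_n = J = κ_∞* ∘ κ_n. If the projections ι_n ∘ ι_n* and ι_∞ ∘ ι_∞* commute in H, then the projections κ_n ∘ κ_n* and κ_∞ ∘ κ_∞* commute in H'. (The commuting property of the projections is invariant among all parent spaces factorising the same identification operator.) -/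
open ContinuousLinearMap

/-!
Write `P = V V*` and `Q = W W*` for partial isometries `V` and `W`. Then `Q P = W (W* V) V*` and
`W* V = W* (Q P) V`, so `Q P` is idempotent if and only if `W* V` is a partial isometry. A product
of two projections is idempotent only if they commute, because
`(P Q - Q P Q)* (P Q - Q P Q) = Q P Q - Q P Q P Q`. Hence whether `P` and `Q` commute can be read
off from the identification operator `W* V` alone.
-/

section StarProjection

variable {A : Type*} [NonUnitalNormedRing A] [StarRing A] [CStarRing A] {p q : A}

theorem mul_eq_mul_mul_of_isIdempotentElem_mul (hp : IsStarProjection p)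
    (hq : IsStarProjection q) (hqp : IsIdempotentElem (q * p)) : p * q = q * p * q := by
  have hqpqp : q * p * (q * p) = q * p := hqp
  have hpp : p * p = p := hp.isIdempotentElem
  have hqq : q * q = q := hq.isIdempotentElem
  rw [← sub_eq_zero, ← CStarRing.star_mul_self_eq_zero_iff]
  calc star (p * q - q * p * q) * (p * q - q * p * q)
      = (q * p - q * p * q) * (p * q - q * p * q) := by
        simp only [star_sub, star_mul, hp.isSelfAdjoint.star_eq, hq.isSelfAdjoint.star_eq,
          mul_assoc]
    _ = q * (p * p) * q - q * p * (q * p) * q - q * p * (q * p) * q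
          + q * p * (q * q) * p * q := by noncomm_ring
    _ = 0 := by
        rw [hpp, hqq, hqpqp, mul_assoc (q * p) q p, hqpqp]
        abel

theorem commute_iff_isIdempotentElem_mul (hp : IsStarProjection p) (hq : IsStarProjection q) :
    Commute p q ↔ IsIdempotentElem (q * p) := by
  refine ⟨fun h => (hq.mul hp h.symm).isIdempotentElem, fun hqp => ?_⟩
  have hpq : p * q = q * p * q := mul_eq_mul_mul_of_isIdempotentElem_mul hp hq hqp
  have hsa : IsSelfAdjoint (p * q) := by
    rw [hpq]
    simpa only [hq.isSelfAdjoint.star_eq] using hp.isSelfAdjoint.conjugate q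
  exact (IsSelfAdjoint.commute_iff hp.isSelfAdjoint hq.isSelfAdjoint).mpr hsa

end StarProjection

section PartialIsometry

open scoped InnerProduct

variable {𝕜 E F G : Type*} [RCLike 𝕜]
  [NormedAddCommGroup E] [InnerProductSpace 𝕜 E] [CompleteSpace E]
  [NormedAddCommGroup F] [InnerProductSpace 𝕜 F] [CompleteSpace F]
  [NormedAddCommGroup G] [InnerProductSpace 𝕜 G] [CompleteSpace G]

/-- A partial isometry between Hilbert spaces, encoded by the identity `T T* T = T`, which is
equivalent to `T` being isometric on the orthogonal complement of its kernel. -/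
def IsPartialIsometry (T : E →L[𝕜] F) : Prop :=
  T ∘L adjoint T ∘L T = T

theorem isPartialIsometry_of_adjoint_comp_self {T : E →L[𝕜] F}
    (hT : adjoint T ∘L T = ContinuousLinearMap.id 𝕜 E) : IsPartialIsometry T := by
  rw [IsPartialIsometry, hT, comp_id]

namespace IsPartialIsometry

variable {V : E →L[𝕜] G} {W : F →L[𝕜] G}

theorem isStarProjection_comp_adjoint (hV : IsPartialIsometry V) :
    IsStarProjection (V ∘L V†) where
  isIdempotentElem := congrArg (· ∘L V†) hV
  isSelfAdjoint := by
    rw [isSelfAdjoint_iff', adjoint_comp, adjoint_adjoint]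

theorem isIdempotentElem_mul_iff (hV : IsPartialIsometry V) (hW : IsPartialIsometry W) :
    IsIdempotentElem ((W ∘L W†) * (V ∘L V†)) ↔ IsPartialIsometry (W† ∘L V) := by
  have hW' : W† ∘L W ∘L W† = W† := by
    simpa only [adjoint_comp, adjoint_adjoint, comp_assoc] using congrArg adjoint hW
  constructor
  · intro h
    calc (W† ∘L V) ∘L (W† ∘L V)† ∘L (W† ∘L V)
        = (W† ∘L W ∘L W†) ∘L (V ∘L V†) ∘L (W ∘L W†) ∘L (V ∘L V† ∘L V) := by
          rw [hW', hV, adjoint_comp, adjoint_adjoint]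
          simp only [comp_assoc]
      _ = W† ∘L (((W ∘L W†) * (V ∘L V†)) * ((W ∘L W†) * (V ∘L V†))) ∘L V := by
          simp only [mul_def, comp_assoc]
      _ = (W† ∘L W ∘L W†) ∘L (V ∘L V† ∘L V) := by
          rw [h.eq]
          simp only [mul_def, comp_assoc]
      _ = W† ∘L V := by rw [hW', hV]
  · intro h
    calc ((W ∘L W†) * (V ∘L V†)) * ((W ∘L W†) * (V ∘L V†))
        = W ∘L ((W† ∘L V) ∘L (W† ∘L V)† ∘L (W† ∘L V)) ∘L V† := by
          rw [adjoint_comp, adjoint_adjoint]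
          simp only [mul_def, comp_assoc]
      _ = W ∘L (W† ∘L V) ∘L V† := by rw [h]
      _ = (W ∘L W†) * (V ∘L V†) := by simp only [mul_def, comp_assoc]

theorem commute_comp_adjoint_iff (hV : IsPartialIsometry V) (hW : IsPartialIsometry W) :
    Commute (V ∘L V†) (W ∘L W†) ↔ IsPartialIsometry (W† ∘L V) :=
  (commute_iff_isIdempotentElem_mul hV.isStarProjection_comp_adjoint
    hW.isStarProjection_comp_adjoint).trans (hV.isIdempotentElem_mul_iff hW)

end IsPartialIsometry

end PartialIsometry

theorem projection_commuting_invariant_general {𝕜 E F G G' : Type*} [RCLike 𝕜]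
    [NormedAddCommGroup E] [InnerProductSpace 𝕜 E] [CompleteSpace E]
    [NormedAddCommGroup F] [InnerProductSpace 𝕜 F] [CompleteSpace F]
    [NormedAddCommGroup G] [InnerProductSpace 𝕜 G] [CompleteSpace G]
    [NormedAddCommGroup G'] [InnerProductSpace 𝕜 G'] [CompleteSpace G']
    {V : E →L[𝕜] G} {W : F →L[𝕜] G} {V' : E →L[𝕜] G'} {W' : F →L[𝕜] G'}
    (hV : IsPartialIsometry V) (hW : IsPartialIsometry W)
    (hV' : IsPartialIsometry V') (hW' : IsPartialIsometry W')
    (hfac : adjoint W ∘L V = adjoint W' ∘L V') :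
    Commute (V ∘L adjoint V) (W ∘L adjoint W) ↔
      Commute (V' ∘L adjoint V') (W' ∘L adjoint W') := by
  rw [hV.commute_comp_adjoint_iff hW, hV'.commute_comp_adjoint_iff hW', hfac]

/-- The commuting property of the projections is an invariant among all parent spaces
factorising the same identification operator `J`. -/
theorem projection_commuting_invariant {Hn Hinf H H' : Type*}
    [NormedAddCommGroup Hn] [InnerProductSpace ℂ Hn] [CompleteSpace Hn]
    [NormedAddCommGroup Hinf] [InnerProductSpace ℂ Hinf] [CompleteSpace Hinf]
    [NormedAddCommGroup H] [InnerProductSpace ℂ H] [CompleteSpace H]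
    [NormedAddCommGroup H'] [InnerProductSpace ℂ H'] [CompleteSpace H']
    (J : Hn →L[ℂ] Hinf)
    (ιn : Hn →L[ℂ] H) (ιinf : Hinf →L[ℂ] H)
    (κn : Hn →L[ℂ] H') (κinf : Hinf →L[ℂ] H')
    (hιn : (adjoint ιn) ∘L ιn = ContinuousLinearMap.id ℂ Hn)
    (hιinf : (adjoint ιinf) ∘L ιinf = ContinuousLinearMap.id ℂ Hinf)
    (hκn : (adjoint κn) ∘L κn = ContinuousLinearMap.id ℂ Hn)
    (hκinf : (adjoint κinf) ∘L κinf = ContinuousLinearMap.id ℂ Hinf)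
    (hfacι : (adjoint ιinf) ∘L ιn = J)
    (hfacκ : (adjoint κinf) ∘L κn = J)
    (hcomm : (ιn ∘L (adjoint ιn)) ∘L (ιinf ∘L (adjoint ιinf)) =
             (ιinf ∘L (adjoint ιinf)) ∘L (ιn ∘L (adjoint ιn))) :
    (κn ∘L (adjoint κn)) ∘L (κinf ∘L (adjoint κinf)) =
      (κinf ∘L (adjoint κinf)) ∘L (κn ∘L (adjoint κn)) :=
  (projection_commuting_invariant_general (isPartialIsometry_of_adjoint_comp_self hιn)
    (isPartialIsometry_of_adjoint_comp_self hιinf) (isPartialIsometry_of_adjoint_comp_self hκn)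
    (isPartialIsometry_of_adjoint_comp_self hκinf) (hfacι.trans hfacκ.symm)).mp hcomm
end

section
/- In the parent-space setup, assume that the identification operator J = ι_∞* ∘ ι_n is a co-isometry, i.e. J ∘ J* = id_{H_∞}, and let δ ≥ 0 with ‖(id_{H_n} − J* ∘ J) ∘ R_n‖ ≤ δ and ‖J ∘ R_n − R_∞ ∘ J‖ ≤ δ. Then the range of ι_∞ is contained in the range of ι_n, ‖R_n − J* ∘ R_∞ ∘ J‖ ≤ 2δ, and consequently Weidmann's lifted resolvent difference satisfies ‖D‖ ≤ 2δ. -/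
open ContinuousLinearMap

/-!
If a contraction `S` is a left inverse of a contraction `T`, then `T` is isometric and
`⟪S* x, T x⟫ = ‖x‖²` is the equality case of Cauchy–Schwarz, so that `S* = T`. Co-isometry of `J`
says that `ι∞*` is a left inverse of `ιₙ ∘ J*`; hence `ιₙ ∘ J* = ι∞`. This yields the inclusion of
the ranges and turns Weidmann's difference into the compression
`D = ιₙ ∘ (Rₙ - J* ∘ R∞ ∘ J) ∘ ιₙ*`, while
`Rₙ - J* ∘ R∞ ∘ J = (id - J* ∘ J) ∘ Rₙ + J* ∘ (J ∘ Rₙ - R∞ ∘ J)`.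
-/

section NormedSpace

variable {𝕜 E F G K : Type*} [NontriviallyNormedField 𝕜]
  [SeminormedAddCommGroup E] [NormedSpace 𝕜 E] [SeminormedAddCommGroup F] [NormedSpace 𝕜 F]
  [SeminormedAddCommGroup G] [NormedSpace 𝕜 G] [SeminormedAddCommGroup K] [NormedSpace 𝕜 K]

theorem norm_comp_le_one {S : F →L[𝕜] G} {T : E →L[𝕜] F} (hS : ‖S‖ ≤ 1) (hT : ‖T‖ ≤ 1) :
    ‖S ∘L T‖ ≤ 1 :=
  (opNorm_comp_le S T).trans (mul_le_one₀ hS (norm_nonneg T) hT)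

theorem norm_comp_comp_le_of_norm_le_one {S : G →L[𝕜] K} {U : E →L[𝕜] F} (hS : ‖S‖ ≤ 1)
    (hU : ‖U‖ ≤ 1) (T : F →L[𝕜] G) : ‖S ∘L T ∘L U‖ ≤ ‖T‖ :=
  calc ‖S ∘L T ∘L U‖ ≤ ‖S‖ * ‖T ∘L U‖ := opNorm_comp_le S _
    _ ≤ ‖T ∘L U‖ := mul_le_of_le_one_left (norm_nonneg _) hS
    _ ≤ ‖T‖ * ‖U‖ := opNorm_comp_le T U
    _ ≤ ‖T‖ := mul_le_of_le_one_right (norm_nonneg T) hU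

theorem norm_sub_comp_comp_le_norm_add (A : F →L[𝕜] E) (B : E →L[𝕜] F)
    (R : E →L[𝕜] E) (S : F →L[𝕜] F) :
    ‖R - A ∘L S ∘L B‖ ≤
      ‖(ContinuousLinearMap.id 𝕜 E - A ∘L B) ∘L R‖ + ‖A‖ * ‖B ∘L R - S ∘L B‖ := by
  have h_split : R - A ∘L S ∘L B =
      (ContinuousLinearMap.id 𝕜 E - A ∘L B) ∘L R + A ∘L (B ∘L R - S ∘L B) := by
    ext x
    simp
  rw [h_split]
  exact norm_add_le_of_le le_rfl (opNorm_comp_le _ _)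

end NormedSpace

section InnerProductSpace

variable {𝕜 E F G : Type*} [RCLike 𝕜]
  [NormedAddCommGroup E] [InnerProductSpace 𝕜 E] [CompleteSpace E]
  [NormedAddCommGroup F] [InnerProductSpace 𝕜 F] [CompleteSpace F]
  [NormedAddCommGroup G] [InnerProductSpace 𝕜 G] [CompleteSpace G]

theorem norm_adjoint_le_one {T : E →L[𝕜] F} (hT : ‖T‖ ≤ 1) : ‖adjoint T‖ ≤ 1 := by
  rwa [LinearIsometryEquiv.norm_map]

theorem norm_le_one_of_adjoint_comp_self {T : E →L[𝕜] F}
    (hT : adjoint T ∘L T = ContinuousLinearMap.id 𝕜 E) : ‖T‖ ≤ 1 :=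
  T.opNorm_le_bound zero_le_one fun x ↦ by
    rw [one_mul, (norm_map_iff_adjoint_comp_self T).2 hT x]

theorem adjoint_eq_of_comp_eq_id_of_norm_le_one {S : F →L[𝕜] E} {T : E →L[𝕜] F}
    (hS : ‖S‖ ≤ 1) (hT : ‖T‖ ≤ 1) (hST : S ∘L T = ContinuousLinearMap.id 𝕜 E) : adjoint S = T := by
  ext x
  have hSTx : S (T x) = x := DFunLike.congr_fun hST x
  have hTx : ‖T x‖ = ‖x‖ := by
    refine le_antisymm (by simpa only [one_mul] using T.le_of_opNorm_le hT x) ?_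
    simpa only [hSTx, one_mul] using S.le_of_opNorm_le hS (T x)
  have h_le : ‖adjoint S x‖ ≤ ‖T x‖ := by
    simpa only [hTx, one_mul] using (adjoint S).le_of_opNorm_le (norm_adjoint_le_one hS) x
  refine eq_of_norm_le_re_inner_eq_norm_sq (𝕜 := 𝕜) h_le ?_
  rw [adjoint_inner_left, hSTx, inner_self_eq_norm_sq, hTx]

theorem comp_adjoint_adjoint_comp_eq_of_coisometry {U : E →L[𝕜] G} {V : F →L[𝕜] G}
    (hU : ‖U‖ ≤ 1) (hV : ‖V‖ ≤ 1)
    (hUV : (adjoint V ∘L U) ∘L adjoint (adjoint V ∘L U) = ContinuousLinearMap.id 𝕜 F) :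
    U ∘L adjoint (adjoint V ∘L U) = V := by
  have hV_adj : ‖adjoint V‖ ≤ 1 := norm_adjoint_le_one hV
  have h_norm : ‖U ∘L adjoint (adjoint V ∘L U)‖ ≤ 1 :=
    norm_comp_le_one hU (norm_adjoint_le_one (norm_comp_le_one hV_adj hU))
  rw [← adjoint_eq_of_comp_eq_id_of_norm_le_one hV_adj h_norm hUV, adjoint_adjoint]

theorem comp_comp_adjoint_sub_comp_comp_adjoint {U : E →L[𝕜] G} {V : F →L[𝕜] G}
    {J : E →L[𝕜] F} (hV : U ∘L adjoint J = V) (R : E →L[𝕜] E) (S : F →L[𝕜] F) :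
    U ∘L R ∘L adjoint U - V ∘L S ∘L adjoint V =
      U ∘L (R - adjoint J ∘L S ∘L J) ∘L adjoint U := by
  have hV_adj : adjoint V = J ∘L adjoint U := by rw [← hV, adjoint_comp, adjoint_adjoint]
  rw [hV_adj, ← hV]
  ext x
  simp

end InnerProductSpace

theorem coisometric_identification_weidmann_estimate_general {𝕜 Hn Hinf H : Type*} [RCLike 𝕜]
    [NormedAddCommGroup Hn] [InnerProductSpace 𝕜 Hn] [CompleteSpace Hn]
    [NormedAddCommGroup Hinf] [InnerProductSpace 𝕜 Hinf] [CompleteSpace Hinf]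
    [NormedAddCommGroup H] [InnerProductSpace 𝕜 H] [CompleteSpace H]
    {ιn : Hn →L[𝕜] H} {ιinf : Hinf →L[𝕜] H} (hιn : ‖ιn‖ ≤ 1) (hιinf : ‖ιinf‖ ≤ 1)
    {Rn : Hn →L[𝕜] Hn} {Rinf : Hinf →L[𝕜] Hinf} {J : Hn →L[𝕜] Hinf} {D : H →L[𝕜] H}
    (hJ : J = adjoint ιinf ∘L ιn)
    (hD : D = ιn ∘L Rn ∘L adjoint ιn - ιinf ∘L Rinf ∘L adjoint ιinf)
    (hco : J ∘L adjoint J = ContinuousLinearMap.id 𝕜 Hinf) {δ₁ δ₂ : ℝ}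
    (h₁ : ‖(ContinuousLinearMap.id 𝕜 Hn - adjoint J ∘L J) ∘L Rn‖ ≤ δ₁)
    (h₂ : ‖J ∘L Rn - Rinf ∘L J‖ ≤ δ₂) :
    Set.range ιinf ⊆ Set.range ιn ∧
    ‖Rn - adjoint J ∘L Rinf ∘L J‖ ≤ δ₁ + δ₂ ∧
    ‖D‖ ≤ δ₁ + δ₂ := by
  have h_factor : ιn ∘L adjoint J = ιinf := by
    subst hJ
    exact comp_adjoint_adjoint_comp_eq_of_coisometry hιn hιinf hco
  have hJ_adj : ‖adjoint J‖ ≤ 1 :=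
    norm_adjoint_le_one (hJ ▸ norm_comp_le_one (norm_adjoint_le_one hιinf) hιn)
  have h_resolvent : ‖Rn - adjoint J ∘L Rinf ∘L J‖ ≤ δ₁ + δ₂ :=
    (norm_sub_comp_comp_le_norm_add _ _ _ _).trans
      (add_le_add h₁ ((mul_le_of_le_one_left (norm_nonneg _) hJ_adj).trans h₂))
  refine ⟨?_, h_resolvent, ?_⟩
  · rw [← h_factor, coe_comp]
    exact Set.range_comp_subset_range _ _
  · rw [hD, comp_comp_adjoint_sub_comp_comp_adjoint h_factor]
    exact (norm_comp_comp_le_of_norm_le_one hιn (norm_adjoint_le_one hιn) _).trans h_resolvent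

/-- If the identification operator `J = ι∞* ∘ ιₙ` is a co-isometry, then the range of
`ι∞` is contained in the range of `ιₙ`, and the QUE-estimates imply Weidmann's norm
estimate `‖D‖ ≤ 2δ`. -/
theorem coisometric_identification_weidmann_estimate {Hn Hinf H : Type*}
    [NormedAddCommGroup Hn] [InnerProductSpace ℂ Hn] [CompleteSpace Hn]
    [NormedAddCommGroup Hinf] [InnerProductSpace ℂ Hinf] [CompleteSpace Hinf]
    [NormedAddCommGroup H] [InnerProductSpace ℂ H] [CompleteSpace H]
    (ιn : Hn →L[ℂ] H) (ιinf : Hinf →L[ℂ] H)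
    (hιn : (adjoint ιn) ∘L ιn = ContinuousLinearMap.id ℂ Hn)
    (hιinf : (adjoint ιinf) ∘L ιinf = ContinuousLinearMap.id ℂ Hinf)
    (Rn : Hn →L[ℂ] Hn) (Rinf : Hinf →L[ℂ] Hinf)
    (J : Hn →L[ℂ] Hinf) (D : H →L[ℂ] H)
    (hJ : J = (adjoint ιinf) ∘L ιn)
    (hD : D = ιn ∘L Rn ∘L (adjoint ιn) - ιinf ∘L Rinf ∘L (adjoint ιinf))
    (hco : J ∘L (adjoint J) = ContinuousLinearMap.id ℂ Hinf)
    (δ : ℝ) (hδ : 0 ≤ δ)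
    (h₁ : ‖(ContinuousLinearMap.id ℂ Hn - (adjoint J) ∘L J) ∘L Rn‖ ≤ δ)
    (h₂ : ‖J ∘L Rn - Rinf ∘L J‖ ≤ δ) :
    Set.range ιinf ⊆ Set.range ιn ∧
    ‖Rn - (adjoint J) ∘L Rinf ∘L J‖ ≤ 2 * δ ∧
    ‖D‖ ≤ 2 * δ :=
  two_mul δ ▸ coisometric_identification_weidmann_estimate_general
    (norm_le_one_of_adjoint_comp_self hιn) (norm_le_one_of_adjoint_comp_self hιinf) hJ hD hco h₁ h₂
end
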